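/- Let r and n be integers with 2 ≤ r < n, and let f : F → 𝔽₂ be defined by f(x) = tr(x^{2^{r+1} − 1}). Then nl_r(f) ≥ 2^{n−1} − 2^{(1 − 2^{−r})·n + r/2^{r−1} − 1} − Σ_{j=1}^{r−1} j · 2^{((2^j − 1)/2^r)·n − ((2^j − 1)/2^{r−1})·r − (j+1)}. -/

import Mathlib

noncomputable section

/-- `Fq n` is the finite field with `2 ^ n` elements. -/
abbrev Fq (n : ℕ) : Type := GaloisField 2 n

/-- The absolute trace map `tr x = x + x^2 + x^4 + ⋯ + x^(2^(n-1))` from `Fq n` to `𝔽₂`. -/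
def tr {n : ℕ} (x : Fq n) : ZMod 2 := Algebra.trace (ZMod 2) (Fq n) x

/-- The derivative of `f` with respect to `a`. -/
def der {n : ℕ} (f : Fq n → ZMod 2) (a : Fq n) : Fq n → ZMod 2 :=
  fun x => f x + f (x + a)

/-- Iterated derivatives along a list of directions (head applied last/outermost). -/
def derIter {n : ℕ} (f : Fq n → ZMod 2) : List (Fq n) → (Fq n → ZMod 2)
  | [] => f
  | a :: as => der (derIter f as) a

/-- `g` has algebraic degree at most `r`: all `(r+1)`-th order derivatives vanish. -/
def degLE {n : ℕ} (g : Fq n → ZMod 2) (r : ℕ) : Prop :=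
  ∀ l : List (Fq n), l.length = r + 1 → derIter g l = fun _ => 0

/-- Hamming distance between two Boolean functions on `Fq n`. -/
def hdist {n : ℕ} (f g : Fq n → ZMod 2) : ℕ :=
  {x : Fq n | f x ≠ g x}.ncard

/-- The `r`-th order nonlinearity of `f`. -/
def nl {n : ℕ} (r : ℕ) (f : Fq n → ZMod 2) : ℕ :=
  sInf {d : ℕ | ∃ g : Fq n → ZMod 2, degLE g r ∧ d = hdist f g}

/-- The linear kernel of `f`: directions along which the derivative is constant. -/
def linKer {n : ℕ} (f : Fq n → ZMod 2) : Set (Fq n) :=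
  {b | ∃ c : ZMod 2, ∀ x, der f b x = c}

/-- The weight of a Boolean function on `Fq n`. -/
def wt {n : ℕ} (f : Fq n → ZMod 2) : ℕ := {x : Fq n | f x = 1}.ncard

set_option linter.unusedSectionVars false
set_option linter.unusedDecidableInType false
section Gen

variable {F : Type} [Field F]

def qM : List F → F → F
  | [], y => y
  | a :: l, y => qM l y ^ 2 + qM l a * qM l y

def qD : List F → F
  | [] => 1
  | a :: l => qM l a * qD l

def dF {A : Type} [Add A] (φ : F → A) : List F → F → A
  | [] => φ
  | a :: l => fun x => dF φ l x + dF φ l (x + a)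

lemma dF_append {A : Type} [Add A] (φ : F → A) (l : List F) (a : F) :
    dF φ (l ++ [a]) = dF (fun x => φ x + φ (x + a)) l := by
  induction l with
  | nil => rfl
  | cons b l ih => simp only [List.cons_append, dF, ih]

lemma dF_add {A : Type} [AddCommMonoid A] (φ ψ : F → A) (l : List F) (x : F) :
    dF (fun x => φ x + ψ x) l x = dF φ l x + dF ψ l x := by
  induction l generalizing x with
  | nil => rfl
  | cons b l ih => simp only [dF, ih]; abel

lemma dF_hom {A B : Type} [AddCommMonoid A] [AddCommMonoid B] (T : A →+ B) (φ : F → A)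
    (l : List F) (x : F) :
    dF (fun x => T (φ x)) l x = T (dF φ l x) := by
  induction l generalizing x with
  | nil => rfl
  | cons b l ih => simp only [dF, ih, map_add]

lemma dF_zero {A : Type} [AddCommMonoid A] (l : List F) (x : F) :
    dF (fun _ => (0 : A)) l x = 0 := by
  induction l generalizing x with
  | nil => rfl
  | cons b l ih => simp [dF, ih]

variable [CharP F 2]

lemma qM_add (l : List F) (x y : F) : qM l (x + y) = qM l x + qM l y := by
  induction l generalizing x y with
  | nil => rfl
  | cons a l ih => simp only [qM, ih, CharTwo.add_sq]; ring

lemma dF_comp {A : Type} [Add A] (φ : F → A) (a : F) (l : List F) (x : F) :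
    dF (fun x => φ (qM [a] x)) l x = dF φ (l.map (qM [a])) (qM [a] x) := by
  induction l generalizing x with
  | nil => rfl
  | cons b l ih => simp only [dF, ih, List.map_cons, qM_add]

lemma qM_append (l : List F) (a y : F) : qM (l ++ [a]) y = qM (l.map (qM [a])) (qM [a] y) := by
  induction l generalizing y with
  | nil => rfl
  | cons b l ih =>
    simp only [List.cons_append, List.map_cons]
    rw [qM, qM, ih, ih]

lemma qD_append (l : List F) (a : F) : qD (l ++ [a]) = a * qD (l.map (qM [a])) := by
  induction l with
  | nil => simp [qD, qM]
  | cons b l ih =>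
    simp only [List.cons_append, List.map_cons]
    rw [qD, qD, ih, qM_append]; ring

lemma two_eq_zero' : (2 : F) = 0 := CharTwo.two_eq_zero

lemma der_pow (k : ℕ) (a x : F) :
    x ^ (2 ^ (k + 1) - 1) + (x + a) ^ (2 ^ (k + 1) - 1) =
      a ^ 2 ^ k * (x ^ (2 ^ k - 1) + (x + a) ^ (2 ^ k - 1)) + a * (qM [a] x) ^ (2 ^ k - 1) := by
  have e : 2 ^ (k + 1) - 1 = 2 ^ k + (2 ^ k - 1) := by
    have : 0 < 2 ^ k := by positivity
    rw [pow_succ]; omega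
  have e1 : ∀ z : F, z ^ 2 ^ k = z * z ^ (2 ^ k - 1) := by
    intro z
    rw [← pow_succ']
    congr 1
    have : 0 < 2 ^ k := by positivity
    omega
  have hq : qM [a] x = x * (x + a) := by simp [qM]; ring
  have h3 : a ^ 2 ^ k = x ^ 2 ^ k + (x + a) ^ 2 ^ k := by
    rw [add_pow_char_pow, ← add_assoc, CharTwo.add_self_eq_zero, zero_add]
  rw [hq, mul_pow, e, pow_add, pow_add, h3, e1 x, e1 (x + a)]
  generalize x ^ (2 ^ k - 1) = X
  generalize (x + a) ^ (2 ^ k - 1) = Y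
  have := two_eq_zero' (F := F)
  linear_combination (-x * X * Y - a * X * Y) * this

lemma dF_pow (k : ℕ) (l : List F) (x : F) :
    (k < l.length → dF (fun x : F => x ^ (2 ^ k - 1)) l x = 0) ∧
    (l.length = k → dF (fun x : F => x ^ (2 ^ k - 1)) l x = qD l) := by
  induction k generalizing l x with
  | zero =>
    constructor
    · intro h
      rcases List.eq_nil_or_concat l with rfl | ⟨l', a, rfl⟩
      · simp at h
      · rw [List.concat_eq_append, dF_append]
        simp only [pow_zero, Nat.sub_self, CharTwo.add_self_eq_zero]
        exact dF_zero _ _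
    · intro h
      rw [List.length_eq_zero_iff] at h
      subst h
      simp [dF, qD]
  | succ k ih =>
    rcases List.eq_nil_or_concat l with rfl | ⟨l', a, rfl⟩
    · simp
    · rw [List.concat_eq_append]
      have key : dF (fun x : F => x ^ (2 ^ (k + 1) - 1)) (l' ++ [a]) x
          = a ^ 2 ^ k * dF (fun x : F => x ^ (2 ^ k - 1)) (l' ++ [a]) x
            + a * dF (fun x : F => x ^ (2 ^ k - 1)) (l'.map (qM [a])) (qM [a] x) := by
        rw [dF_append, dF_append]
        simp only [der_pow]
        rw [dF_add]
        congr 1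
        · exact dF_hom (AddMonoidHom.mulLeft (a ^ 2 ^ k)) _ l' x
        · rw [← dF_comp]
          exact dF_hom (AddMonoidHom.mulLeft a) _ l' x
      rw [key]
      constructor
      · intro h
        simp at h
        rw [(ih _ _).1 (by simp; omega), (ih _ _).1 (by simp; omega)]; simp
      · intro h
        simp at h
        rw [(ih _ _).1 (by simp; omega), (ih _ _).2 (by simp; omega), qD_append]; simp


open Finset in
lemma card_fib {A B : Type} [AddCommGroup A] [AddCommGroup B] [Fintype A] [DecidableEq A]
    [DecidableEq B] (φ : A → B) (hφ : ∀ x y, φ (x + y) = φ x + φ y) (Z : Finset B) :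
    #{x | φ x ∈ Z} ≤ #{x | φ x = 0} * #Z := by
  refine card_le_mul_card_image_of_maps_to (f := φ) (by simp) _ ?_
  intro b hb
  by_cases h : ∃ x0, φ x0 = b
  · obtain ⟨x0, hx0⟩ := h
    refine card_le_card_of_injOn (fun x => x - x0) ?_ ?_
    · intro x hx
      simp at hx ⊢
      have := hφ (x - x0) x0
      rw [sub_add_cancel, hx.2, hx0] at this
      simpa using this
    · intro x _ y _ h
      simpa using h
  · push Not at h
    rw [card_eq_zero.2]
    · simp
    · ext x; simp [h x]

def chi (z : ZMod 2) : ℝ := if z = 0 then 1 else -1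

lemma chi_add (a b : ZMod 2) : chi (a + b) = chi a * chi b := by
  have h : ∀ z : ZMod 2, z = 0 ∨ z = 1 := by decide
  have h1 : (1 : ZMod 2) + 1 = 0 := by decide
  rcases h a with rfl | rfl <;> rcases h b with rfl | rfl <;> simp [chi, h1]

lemma chi_zero : chi 0 = 1 := by simp [chi]

lemma chi_one : chi 1 = -1 := by simp [chi]

lemma abs_chi (a : ZMod 2) : |chi a| = 1 := by
  unfold chi; split_ifs <;> simp

variable [Fintype F] [DecidableEq F]

def WW (h : F → ZMod 2) : ℝ := ∑ x, chi (h x)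

lemma WW_sq (h : F → ZMod 2) : WW h ^ 2 = ∑ a, WW (fun x => h x + h (x + a)) := by
  unfold WW
  rw [sq, Finset.sum_mul_sum, Finset.sum_comm, Finset.sum_comm]
  conv_rhs => rw [Finset.sum_comm]
  refine Finset.sum_congr rfl fun x _ => ?_
  simp only [chi_add, ← Finset.mul_sum]
  congr 1
  exact (Equiv.sum_comp (Equiv.addLeft x) (fun y => chi (h y))).symm

lemma WW_zero_of (h : F → ZMod 2) (c : F) (hc : ∀ x, h x + h (x + c) = 1) : WW h = 0 := by
  have h1 : WW h = ∑ x, chi (h (x + c)) :=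
    (Equiv.sum_comp (Equiv.addRight c) (fun y => chi (h y))).symm
  have h2 : ∑ x, chi (h (x + c)) = - WW h := by
    unfold WW
    rw [← Finset.sum_neg_distrib]
    refine Finset.sum_congr rfl fun x _ => ?_
    have := chi_add (h x) (h (x + c))
    rw [hc, chi_one] at this
    have h3 := chi_add (h x) (h x)
    rw [CharTwo.add_self_eq_zero, chi_zero] at h3
    have : chi (h x) * chi (h (x + c)) * chi (h x) = - chi (h x) := by rw [← this]; ring
    rw [mul_right_comm, ← h3] at this
    linarith
  linarith

lemma WW_abs_le (h : F → ZMod 2) : |WW h| ≤ Fintype.card F := by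
  unfold WW
  refine (Finset.abs_sum_le_sum_abs _ _).trans ?_
  simp [abs_chi]

lemma WW_hom (h : F → ZMod 2) (h0 : ∀ x y, h (x + y) = h x + h y) :
    WW h = if (∀ x, h x = 0) then (Fintype.card F : ℝ) else 0 := by
  split_ifs with H
  · simp [WW, H, chi_zero]
  · push Not at H
    obtain ⟨c, hc⟩ := H
    refine WW_zero_of h c fun x => ?_
    rw [h0, ← add_assoc, CharTwo.add_self_eq_zero, zero_add]
    have h : ∀ z : ZMod 2, z = 0 ∨ z = 1 := by decide
    exact (h _).resolve_left hc

open Finset in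
lemma card_ker_le (l : List F) : #{y : F | qM l y = 0} ≤ 2 ^ l.length := by
  induction l with
  | nil =>
    refine card_le_one.2 ?_
    intro x hx y hy
    rw [mem_filter] at hx hy
    exact hx.2.trans hy.2.symm
  | cons a l ih =>
    have h1 := card_fib (qM l) (qM_add l) {0, qM l a}
    have h2 : #({0, qM l a} : Finset F) ≤ 2 := Finset.card_le_two
    have h3 : (univ.filter fun y : F => qM (a :: l) y = 0) ⊆
        univ.filter fun y => qM l y ∈ ({0, qM l a} : Finset F) := by
      intro y hy
      simp only [mem_filter, mem_univ, true_and, mem_insert, mem_singleton] at hy ⊢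
      rw [qM] at hy
      have : qM l y * (qM l y + qM l a) = 0 := by rw [← hy]; ring
      rcases mul_eq_zero.1 this with h | h
      · exact Or.inl h
      · exact Or.inr (CharTwo.add_eq_zero.1 h)
    calc _ ≤ _ := card_le_card h3
      _ ≤ _ := h1
      _ ≤ 2 ^ l.length * 2 := Nat.mul_le_mul ih h2
      _ = _ := by simp [pow_succ]

open Finset in
lemma card_Z (T : F →+ ZMod 2) (hN : ∀ a : F, a ≠ 0 → ∃ b, T (a * b) ≠ 0) (l : List F) :
    #{z : F | ∀ c, T (z * qM l c ^ 2) = 0} = #{c : F | qM l c = 0} := by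
  have h1 : ∑ z : F, ∑ c : F, chi (T (z * qM l c ^ 2))
      = #{z : F | ∀ c, T (z * qM l c ^ 2) = 0} * (Fintype.card F : ℝ) := by
    rw [← nsmul_eq_mul, ← sum_const, sum_filter]
    refine sum_congr rfl fun z _ => ?_
    exact WW_hom (fun c => T (z * qM l c ^ 2)) (by
      intro x y; rw [qM_add, CharTwo.add_sq, mul_add, map_add])
  have h2 : ∑ c : F, ∑ z : F, chi (T (z * qM l c ^ 2))
      = #{c : F | qM l c = 0} * (Fintype.card F : ℝ) := by
    rw [← nsmul_eq_mul, ← sum_const, sum_filter]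
    refine sum_congr rfl fun c _ => ?_
    refine (WW_hom (fun z => T (z * qM l c ^ 2)) (by
      intro x y; rw [add_mul, map_add])).trans ?_
    congr 1
    apply propext
    constructor
    · intro h
      by_contra h0
      obtain ⟨b, hb⟩ := hN (qM l c ^ 2) (pow_ne_zero 2 h0)
      exact hb (by rw [mul_comm]; exact h b)
    · intro h x; simp [h]
  rw [sum_comm, h2] at h1
  have h3 : (Fintype.card F : ℝ) ≠ 0 := by simp
  exact_mod_cast (mul_right_cancel₀ h3 h1).symm

def kap (d : F) : ℕ := (Finset.univ.filter fun m : F => d * m + d ^ 2 * m ^ 4 = 0).card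

open Finset in
lemma card_K (T : F →+ ZMod 2) (hT : ∀ x, T (x ^ 2) = T x)
    (hN : ∀ a : F, a ≠ 0 → ∃ b, T (a * b) ≠ 0) (l : List F) :
    #{b : F | ∀ c, T (qD (c :: b :: l)) = 0} ≤ 2 ^ l.length * kap (qD l) * 2 ^ l.length := by
  set d := qD l with hd
  set θ : F → F := fun m => d * m + d ^ 2 * m ^ 4 with hθ
  have hθa : ∀ x y, θ (x + y) = θ x + θ y := by
    intro x y
    have : (x + y) ^ 4 = x ^ 4 + y ^ 4 := by
      have := add_pow_char_pow (R := F) (p := 2) (n := 2) x y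
      simpa using this
    simp only [hθ, this]; ring
  set Z : Finset F := univ.filter fun z : F => ∀ c, T (z * qM l c ^ 2) = 0 with hZ
  have hsub : (univ.filter fun b : F => ∀ c, T (qD (c :: b :: l)) = 0) ⊆
      univ.filter fun b => θ (qM l b) ∈ Z := by
    intro b hb
    simp only [mem_filter, mem_univ, true_and, hZ] at hb ⊢
    intro c
    rw [← hb c]
    have e1 : θ (qM l b) * qM l c ^ 2
        = d * qM l b * qM l c ^ 2 + (d * qM l b ^ 2 * qM l c) ^ 2 := by
      simp only [hθ]; ring
    have e2 : qD (c :: b :: l) = d * qM l b * qM l c ^ 2 + d * qM l b ^ 2 * qM l c := by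
      simp only [qD, qM, ← hd]; ring
    rw [e1, e2, map_add, map_add, hT]
  have hadd : ∀ x y, θ (qM l (x + y)) = θ (qM l x) + θ (qM l y) := by
    intro x y; rw [qM_add, hθa]
  have h1 := card_fib (fun b => θ (qM l b)) hadd Z
  have h2 := card_fib (qM l) (qM_add l) (univ.filter fun m => θ m = 0)
  simp only [mem_filter, mem_univ, true_and] at h2
  have h3 : #Z ≤ 2 ^ l.length := (card_Z T hN l).trans_le (card_ker_le l)
  calc _ ≤ _ := card_le_card hsub
    _ ≤ _ := h1
    _ ≤ _ := Nat.mul_le_mul (h2.trans (Nat.mul_le_mul_right _ (card_ker_le l))) h3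

lemma der_iter_const (T : F →+ ZMod 2) (r : ℕ) (f g : F → ZMod 2)
    (hf : ∀ x, f x = T (x ^ (2 ^ (r + 1) - 1)))
    (hg : ∀ l : List F, l.length = r + 1 → dF g l = fun _ => 0)
    (l : List F) (hl : l.length = r + 1) (x : F) :
    dF (fun x => f x + g x) l x = T (qD l) := by
  rw [dF_add, hg l hl, add_zero]
  have : f = fun x => T (x ^ (2 ^ (r + 1) - 1)) := funext hf
  rw [this, dF_hom, (dF_pow (r + 1) l x).2 hl]

open Finset in
lemma WW_bound (T : F →+ ZMod 2) (hT : ∀ x, T (x ^ 2) = T x)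
    (hN : ∀ a : F, a ≠ 0 → ∃ b, T (a * b) ≠ 0) (r : ℕ) (h : F → ZMod 2)
    (hh : ∀ l : List F, l.length = r + 1 → ∀ x, dF h l x = T (qD l))
    (l : List F) (hl : l.length + 1 = r) :
    WW (dF h l) ^ 2 ≤ Fintype.card F * (2 ^ l.length * kap (qD l) * 2 ^ l.length : ℕ) := by
  rw [WW_sq]
  have h1 : ∀ b : F, WW (fun x => dF h l x + dF h l (x + b)) ≤
      if (∀ c, T (qD (c :: b :: l)) = 0) then (Fintype.card F : ℝ) else 0 := by
    intro b
    split_ifs with H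
    · exact (le_abs_self _).trans (WW_abs_le _)
    · push Not at H
      obtain ⟨c, hc⟩ := H
      refine (WW_zero_of (dF h (b :: l)) c fun x => ?_).le
      have := hh (c :: b :: l) (by simp; omega) x
      have h : ∀ z : ZMod 2, z = 0 ∨ z = 1 := by decide
      rw [(h _).resolve_left hc] at this
      exact this
  refine (sum_le_sum fun b _ => h1 b).trans ?_
  rw [← sum_filter, sum_const, nsmul_eq_mul, mul_comm]
  gcongr
  exact card_K T hT hN l


/-- Iterated averages over lists of length `k`. -/
def Iav : ℕ → (List F → ℝ) → ℝ
  | 0, P => P []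
  | k + 1, P => Iav k (fun l => (∑ a : F, P (a :: l)) / Fintype.card F)

lemma Iav_mono (k : ℕ) (P Q : List F → ℝ) (h : ∀ l, l.length = k → P l ≤ Q l) :
    Iav k P ≤ Iav k Q := by
  induction k generalizing P Q with
  | zero => exact h [] rfl
  | succ k ih =>
    refine ih _ _ fun l hl => ?_
    gcongr with a
    exact h _ (by simp [hl])

lemma Iav_add_const (k : ℕ) (P : List F → ℝ) (c : ℝ) :
    Iav k (fun l => P l + c) = Iav k P + c := by
  induction k generalizing P with
  | zero => rfl
  | succ k ih =>
    rw [Iav, Iav, ← ih]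
    congr 1
    funext l
    have h3 : (Fintype.card F : ℝ) ≠ 0 := by simp
    simp [Finset.sum_add_distrib]
    field_simp

lemma Iav_sq (k : ℕ) (P : List F → ℝ) : Iav k P ^ 2 ≤ Iav k (fun l => P l ^ 2) := by
  induction k generalizing P with
  | zero => exact le_rfl
  | succ k ih =>
    refine (ih _).trans (Iav_mono _ _ _ fun l _ => ?_)
    have h3 : (0 : ℝ) < Fintype.card F := by exact_mod_cast Fintype.card_pos
    have := sq_sum_le_card_mul_sum_sq (s := (Finset.univ : Finset F)) (f := fun a => P (a :: l))
    rw [div_pow, div_le_div_iff₀ (by positivity) h3]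
    rw [Finset.card_univ] at this
    nlinarith [mul_le_mul_of_nonneg_right this h3.le]

/-- Normalised character sum. -/
def ww (h : F → ZMod 2) : ℝ := WW h / Fintype.card F

lemma ww_abs_le (h : F → ZMod 2) : |ww h| ≤ 1 := by
  have h3 : (0 : ℝ) < Fintype.card F := by exact_mod_cast Fintype.card_pos
  unfold ww
  rw [abs_div, abs_of_pos h3, div_le_one h3]
  exact WW_abs_le h

lemma ww_sq (h : F → ZMod 2) :
    ww h ^ 2 = (∑ a : F, ww (fun x => h x + h (x + a))) / Fintype.card F := by
  unfold ww
  rw [div_pow, WW_sq, ← Finset.sum_div, div_div, sq]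

lemma ww_gowers (k : ℕ) (h : F → ZMod 2) :
    |ww h| ^ 2 ^ k ≤ Iav k (fun l => |ww (dF h l)|) := by
  induction k with
  | zero => simp [Iav, dF]
  | succ k ih =>
    rw [pow_succ, pow_mul]
    refine (pow_le_pow_left₀ (by positivity) ih 2).trans ?_
    refine (Iav_sq _ _).trans (Iav_mono _ _ _ fun l _ => ?_)
    rw [sq_abs, ww_sq]
    gcongr with a
    exact le_abs_self _

lemma Iav_dep (k : ℕ) : Iav k (fun l : List F => if qD l = 0 then (1 : ℝ) else 0)
    ≤ (2 ^ k - 1) / Fintype.card F := by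
  have h3 : (0 : ℝ) < Fintype.card F := by exact_mod_cast Fintype.card_pos
  induction k with
  | zero => simp [Iav, qD]
  | succ k ih =>
    have : Iav (k + 1) (fun l : List F => if qD l = 0 then (1 : ℝ) else 0) ≤
        Iav k (fun l : List F => (if qD l = 0 then (1 : ℝ) else 0) + 2 ^ k / Fintype.card F) := by
      rw [Iav]
      refine Iav_mono (F := F) k _ _ fun l hl => ?_
      split_ifs with h
      · have : ((∑ a : F, if qD (a :: l) = 0 then (1 : ℝ) else 0) / Fintype.card F) = 1 := by
          simp [qD, h]
        rw [this]
        have : (0 : ℝ) ≤ 2 ^ k / Fintype.card F := by positivity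
        linarith
      · rw [zero_add]
        gcongr
        have e : ∀ a : F, (qD (a :: l) = 0) ↔ qM l a = 0 := by
          intro a; simp [qD, h]
        simp only [e]
        rw [Finset.sum_boole]
        have := card_ker_le l
        rw [hl] at this
        exact_mod_cast this
    refine this.trans ?_
    rw [Iav_add_const]
    calc _ ≤ (2 ^ k - 1 : ℝ) / Fintype.card F + 2 ^ k / Fintype.card F := by gcongr
      _ = _ := by rw [pow_succ]; ring

lemma kap_le_four (d : F) (hd : d ≠ 0) : kap d ≤ 4 := by
  classical
  open Polynomial in
  let p : F[X] := C (d ^ 2) * X ^ 4 + C d * X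
  have hp : p.natDegree = 4 := by
    simp only [p]; compute_degree!
  have hp0 : p ≠ 0 := by
    intro h; rw [h] at hp; simp at hp
  unfold kap
  refine le_trans (Finset.card_le_card ?_)
    (p.roots.toFinset_card_le.trans (p.card_roots'.trans_eq hp))
  intro m hm
  simp only [Finset.mem_filter, Finset.mem_univ, true_and] at hm
  rw [Multiset.mem_toFinset, Polynomial.mem_roots hp0]
  simp only [p, Polynomial.IsRoot, Polynomial.eval_add, Polynomial.eval_mul, Polynomial.eval_C,
    Polynomial.eval_X, Polynomial.eval_pow]
  rw [← hm]; ring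

lemma kap_mem (d m : F) (hd : d ≠ 0) (hm : d * m + d ^ 2 * m ^ 4 = 0) (h0 : m ≠ 0) :
    d * m ^ 3 = 1 := by
  have h : d * m * (1 + d * m ^ 3) = 0 := by rw [← hm]; ring
  rcases mul_eq_zero.1 h with h | h
  · simp [hd, h0] at h
  · exact (CharTwo.add_eq_zero.1 h).symm

lemma kap_noncube (d : F) (hd : d ≠ 0) (hc : ∀ m : F, m ^ 3 ≠ d) : kap d ≤ 1 := by
  unfold kap
  have : ∀ m : F, d * m + d ^ 2 * m ^ 4 = 0 → m = 0 := by
    intro m hm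
    by_contra h0
    have := kap_mem d m hd hm h0
    refine hc m⁻¹ ?_
    rw [inv_pow]
    exact (eq_inv_of_mul_eq_one_left this).symm
  refine Finset.card_le_one.2 ?_
  intro x hx y hy
  rw [Finset.mem_filter] at hx hy
  rw [this x hx.2, this y hy.2]

lemma kap_odd (d : F) (hd : d ≠ 0) (hc : ∀ x y : F, x ^ 3 = y ^ 3 → x = y) : kap d ≤ 2 := by
  by_cases H : ∃ z : F, d * z ^ 3 = 1
  · obtain ⟨z, hz⟩ := H
    have : (Finset.univ.filter fun m : F => d * m + d ^ 2 * m ^ 4 = 0) ⊆ {0, z} := by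
      intro m hm
      rw [Finset.mem_filter] at hm
      rw [Finset.mem_insert, Finset.mem_singleton]
      by_cases h0 : m = 0
      · exact Or.inl h0
      · refine Or.inr (hc _ _ ?_)
        have := kap_mem d m hd hm.2 h0
        exact mul_left_cancel₀ hd (this.trans hz.symm)
    exact (Finset.card_le_card this).trans Finset.card_le_two
  · have : (Finset.univ.filter fun m : F => d * m + d ^ 2 * m ^ 4 = 0) ⊆ {0} := by
      intro m hm
      rw [Finset.mem_filter] at hm
      rw [Finset.mem_singleton]
      by_contra h0
      exact H ⟨m, kap_mem d m hd hm.2 h0⟩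
    exact (Finset.card_le_card this).trans (by simp)

open Finset in
lemma noncubes (h3 : 3 ∣ Fintype.card F - 1) :
    Fintype.card F - 1 ≤ 2 * #{ρ : F | ρ ≠ 0 ∧ ∀ m : F, m ^ 3 ≠ ρ} := by
  -- an element of order three
  have hcu : Fintype.card Fˣ = Fintype.card F - 1 := Fintype.card_units F
  have : Fact (Nat.Prime 3) := ⟨by norm_num⟩
  obtain ⟨w, hw⟩ := exists_prime_orderOf_dvd_card 3 (hcu ▸ h3)
  have hw3 : (w : F) ^ 3 = 1 := by
    have := pow_orderOf_eq_one w
    rw [hw] at this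
    rw [← Units.val_pow_eq_pow_val, this, Units.val_one]
  have hw1 : (w : F) ≠ 1 := by
    intro h
    have : w = 1 := by ext; simpa using h
    rw [this, orderOf_one] at hw
    norm_num at hw
  set S : Finset F := univ.filter fun x : F => x ≠ 0 with hS
  have hScard : #S = Fintype.card F - 1 := by
    rw [hS, filter_ne', card_erase_of_mem (mem_univ _), card_univ]
  have him : 2 * #(S.image fun x => x ^ 3) ≤ #S := by
    refine mul_card_image_le_card _ _ ?_
    intro b hb
    obtain ⟨x, hx, rfl⟩ := mem_image.1 hb
    have hx0 : x ≠ 0 := by simpa [hS] using hx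
    have hne : x ≠ w * x := by
      intro h
      apply hw1
      have : (w : F) * x = 1 * x := by rw [← h, one_mul]
      exact mul_right_cancel₀ hx0 this
    rw [← card_pair hne]
    refine card_le_card ?_
    intro y hy
    rw [mem_insert, mem_singleton] at hy
    rcases hy with rfl | rfl
    · simp [hS, hx0]
    · simp [hS, hx0, mul_pow, hw3]
  have hsub : S ⊆ (S.image fun x => x ^ 3) ∪
      univ.filter (fun ρ : F => ρ ≠ 0 ∧ ∀ m : F, m ^ 3 ≠ ρ) := by
    intro x hx
    have hx0 : x ≠ 0 := by simpa [hS] using hx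
    rw [mem_union]
    by_cases h : ∃ m : F, m ^ 3 = x
    · left
      obtain ⟨m, rfl⟩ := h
      refine mem_image.2 ⟨m, ?_, rfl⟩
      simp only [hS, mem_filter, mem_univ, true_and]
      rintro rfl
      simp at hx0
    · right
      push Not at h
      simp [hx0, h]
  have := (card_le_card hsub).trans (card_union_le _ _)
  omega

open Finset in
lemma cube_pairs (L : F → F) (hL : ∀ x y, L (x + y) = L x + L y) (k : ℕ)
    (hk : #{y | L y = 0} ≤ k) (h3 : 3 ∣ Fintype.card F - 1) :
    2 * #{y | L y ≠ 0 ∧ ∃ m : F, m ^ 3 = L y} ^ 2 +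
      (Fintype.card F - 1) * (Fintype.card F - k ^ 2) ≤ 2 * Fintype.card F ^ 2 := by
  set D := Fintype.card F with hD
  set N : Finset F := univ.filter fun ρ : F => ρ ≠ 0 ∧ ∀ m : F, m ^ 3 ≠ ρ with hN
  set G : Finset F := univ.filter fun y => L y ≠ 0 ∧ ∃ m : F, m ^ 3 = L y with hG
  set E : F → Finset (F × F) := fun ρ => univ.filter fun p => L p.2 = ρ * L p.1 ∧ L p.1 ≠ 0 with hE
  have hEcard : ∀ ρ, D - k ^ 2 ≤ #(E ρ) := by
    intro ρ
    have h1 := card_fib (fun p : F × F => L p.2 + ρ * L p.1) (by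
      intro x y; simp only [Prod.fst_add, Prod.snd_add, hL]; ring) univ
    simp only [mem_univ, filter_true, card_univ, Fintype.card_prod, ← hD] at h1
    have hDpos : 0 < D := Fintype.card_pos
    have h2 : D ≤ #{p : F × F | L p.2 + ρ * L p.1 = 0} := Nat.le_of_mul_le_mul_right h1 hDpos
    have h4 : (univ.filter fun p : F × F => L p.2 + ρ * L p.1 = 0) ⊆
        E ρ ∪ (univ.filter fun y => L y = 0) ×ˢ (univ.filter fun y => L y = 0) := by
      intro p hp
      rw [mem_filter] at hp
      have hp2 := CharTwo.add_eq_zero.1 hp.2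
      rw [mem_union]
      by_cases h : L p.1 = 0
      · right
        simp [h] at hp2
        simp [h, hp2]
      · left
        simp [hE, hp2, h]
    have h5 := (card_le_card h4).trans (card_union_le _ _)
    rw [card_product] at h5
    have h6 := Nat.mul_le_mul hk hk
    rw [← sq k] at h6
    omega
  have hdisj : ∀ ρ ∈ N, ∀ ρ' ∈ N, ρ ≠ ρ' → Disjoint (E ρ) (E ρ') := by
    intro ρ _ ρ' _ hne
    rw [disjoint_left]
    intro p hp hp'
    simp only [hE, mem_filter, mem_univ, true_and] at hp hp'
    exact hne (mul_right_cancel₀ hp.2 (hp.1.symm.trans hp'.1))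
  have hdisj2 : Disjoint (G ×ˢ G) (N.biUnion E) := by
    rw [disjoint_left]
    intro p hp hp'
    rw [mem_product] at hp
    simp only [hG, mem_filter, mem_univ, true_and] at hp
    obtain ⟨⟨h1, m, hm⟩, h2, m', hm'⟩ := hp
    obtain ⟨ρ, hρ, hpρ⟩ := mem_biUnion.1 hp'
    simp only [hE, hN, mem_filter, mem_univ, true_and] at hρ hpρ
    refine hρ.2 (m' / m) ?_
    rw [div_pow, hm, hm', hpρ.1]
    field_simp
  have h7 := card_le_univ ((G ×ˢ G) ∪ (N.biUnion E))
  rw [card_union_of_disjoint hdisj2, card_product, card_biUnion hdisj, Fintype.card_prod, ← hD] at h7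
  have h8 : #N * (D - k ^ 2) ≤ ∑ u ∈ N, #(E u) := by
    rw [← smul_eq_mul]
    exact card_nsmul_le_sum _ _ _ fun ρ _ => hEcard ρ
  have h9 := noncubes h3
  have h10 := Nat.mul_le_mul_right (D - k ^ 2) h9
  nlinarith


open Finset in
lemma avg_step (T : F →+ ZMod 2) (hT : ∀ x, T (x ^ 2) = T x)
    (hN : ∀ a : F, a ≠ 0 → ∃ b, T (a * b) ≠ 0) (k n : ℕ) (hn : 2 * (k + 2) < n)
    (hD : Fintype.card F = 2 ^ n) (h : F → ZMod 2)
    (hh : ∀ l : List F, l.length = k + 3 → ∀ x, dF h l x = T (qD l))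
    (τ : ℝ) (hτ0 : 0 ≤ τ) (hτ : τ ^ 2 = 4 ^ (k + 2) / Fintype.card F)
    (l : List F) (hl : l.length = k) (hd : qD l ≠ 0) :
    (∑ y : F, |ww (dF h (y :: l))|) / Fintype.card F
      ≤ 2 ^ k / Fintype.card F + 7 / 8 * τ := by
  have hDpos : (0 : ℝ) < Fintype.card F := by exact_mod_cast Fintype.card_pos
  -- pointwise bound
  have hpt : ∀ (y : F) (c : ℝ), 0 ≤ c → (qD (y :: l) ≠ 0 → (kap (qD (y :: l)) : ℝ) ≤ 4 * c ^ 2) →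
      |ww (dF h (y :: l))| ≤ (if qM l y = 0 then 1 else 0) + τ * c := by
    intro y c hc hk
    split_ifs with h0
    · have := ww_abs_le (dF h (y :: l))
      have : 0 ≤ τ * c := by positivity
      linarith
    · rw [zero_add]
      refine abs_le_of_sq_le_sq ?_ (by positivity)
      have hb := WW_bound T hT hN (k + 2) h hh (y :: l) (by simp [hl])
      have hk' := hk (by simp [qD, h0, hd])
      unfold ww
      rw [div_pow, div_le_iff₀ (by positivity), mul_pow, hτ]
      refine hb.trans ?_
      push_cast
      simp only [List.length_cons, hl]
      have e : (4 : ℝ) ^ (k + 2) / Fintype.card F * c ^ 2 * Fintype.card F ^ 2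
          = Fintype.card F * (2 ^ (k + 1) * (4 * c ^ 2) * 2 ^ (k + 1)) := by
        have : (4 : ℝ) ^ (k + 2) = 4 * 2 ^ (k + 1) * 2 ^ (k + 1) := by
          rw [show (4 : ℝ) = 2 ^ 2 by norm_num, ← pow_mul]; ring
        rw [this]
        field_simp
      rw [e]
      gcongr
  have hker : ∑ y : F, (if qM l y = 0 then (1 : ℝ) else 0) ≤ 2 ^ k := by
    rw [sum_boole]
    have := card_ker_le l
    rw [hl] at this
    exact_mod_cast this
  suffices H : ∃ c : F → ℝ, (∀ y, 0 ≤ c y) ∧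
      (∀ y, qD (y :: l) ≠ 0 → (kap (qD (y :: l)) : ℝ) ≤ 4 * c y ^ 2) ∧
      ∑ y, c y ≤ 7 / 8 * Fintype.card F by
    obtain ⟨c, hc0, hck, hcs⟩ := H
    have h1 : ∑ y : F, |ww (dF h (y :: l))| ≤ 2 ^ k + τ * (7 / 8 * Fintype.card F) := by
      refine (sum_le_sum fun y _ => hpt y (c y) (hc0 y) (hck y)).trans ?_
      rw [sum_add_distrib, ← mul_sum]
      gcongr
    rw [div_le_iff₀ hDpos, add_mul, div_mul_cancel₀ _ hDpos.ne']
    linarith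
  by_cases h3 : 3 ∣ Fintype.card F - 1
  · let L : F → F := fun y => qD (y :: l)
    have hL : ∀ x y, L (x + y) = L x + L y := by
      intro x y; simp only [L, qD, qM_add]; ring
    have hk : #{y | L y = 0} ≤ 2 ^ k := by
      have e : ∀ a : F, (L a = 0) ↔ qM l a = 0 := by
        intro a; simp [L, qD, hd]
      simp only [e]
      rw [← hl]
      exact card_ker_le l
    have hp := cube_pairs L hL (2 ^ k) hk h3
    set G : Finset F := univ.filter fun y => L y ≠ 0 ∧ ∃ m : F, m ^ 3 = L y with hG
    have hGb : (#G : ℝ) ≤ 3 / 4 * Fintype.card F := by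
      have hk2 : 16 * (2 ^ k) ^ 2 ≤ Fintype.card F := by
        rw [hD, show 16 = 2 ^ 4 by norm_num, ← pow_mul, ← pow_add]
        exact Nat.pow_le_pow_right (by norm_num) (by omega)
      have hD16 : 16 ≤ Fintype.card F := by
        have : 1 ≤ (2 ^ k) ^ 2 := Nat.one_le_iff_ne_zero.2 (by positivity)
        omega
      have hc1 : 1 ≤ Fintype.card F := by omega
      have hc2 : (2 ^ k) ^ 2 ≤ Fintype.card F := by omega
      have hp' : 2 * (#G : ℝ) ^ 2 +
          (Fintype.card F - 1) * (Fintype.card F - (2 ^ k) ^ 2) ≤ 2 * (Fintype.card F : ℝ) ^ 2 := by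
        have : ((2 * #G ^ 2 + (Fintype.card F - 1) * (Fintype.card F - (2 ^ k) ^ 2) : ℕ) : ℝ)
          ≤ ((2 * Fintype.card F ^ 2 : ℕ) : ℝ) := by exact_mod_cast hp
        push_cast [Nat.cast_sub hc1, Nat.cast_sub hc2] at this
        exact this
      have hk2' : 16 * ((2 : ℝ) ^ k) ^ 2 ≤ Fintype.card F := by exact_mod_cast hk2
      have hD16' : (16 : ℝ) ≤ Fintype.card F := by exact_mod_cast hD16
      refine le_of_sq_le_sq ?_ (by positivity)
      generalize (Fintype.card F : ℝ) = D at *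
      generalize ((2 : ℝ) ^ k) ^ 2 = K at *
      have : (D - 1) * (15 / 16 * D) ≤ (D - 1) * (D - K) :=
        mul_le_mul_of_nonneg_left (by linarith) (by linarith)
      nlinarith
    refine ⟨fun y => if y ∈ G then 1 else 1 / 2, ?_, ?_, ?_⟩
    · intro y; dsimp only; split_ifs <;> norm_num
    · intro y hy
      dsimp only
      split_ifs with hyG
      · have := kap_le_four _ hy
        have : (kap (qD (y :: l)) : ℝ) ≤ 4 := by exact_mod_cast this
        linarith
      · have := kap_noncube _ hy (by
          intro m hm
          apply hyG
          rw [hG, mem_filter]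
          exact ⟨mem_univ _, hy, m, hm⟩)
        have : (kap (qD (y :: l)) : ℝ) ≤ 1 := by exact_mod_cast this
        linarith
    · have : ∀ y : F, (if y ∈ G then (1 : ℝ) else 1 / 2) = (if y ∈ G then 1 / 2 else 0) + 1 / 2 := by
        intro y; split_ifs <;> norm_num
      simp only [this, sum_add_distrib, sum_const, card_univ, nsmul_eq_mul, sum_ite_mem, univ_inter]
      linarith
  · refine ⟨fun _ => 3 / 4, ?_, ?_, ?_⟩
    · intro y; norm_num
    · intro y hy
      have := kap_odd _ hy (by
        have hcop : (Fintype.card F - 1).Coprime 3 :=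
          Nat.Coprime.symm ((Nat.Prime.coprime_iff_not_dvd (by norm_num)).2 h3)
        intro x y hxy
        by_cases hy0 : y = 0
        · subst hy0
          simpa using hxy
        have hx0 : x ≠ 0 := by
          rintro rfl
          apply hy0
          simpa using hxy.symm
        have q3 : (x / y) ^ 3 = 1 := by
          rw [div_pow, hxy, div_self (pow_ne_zero 3 hy0)]
        have qD : (x / y) ^ (Fintype.card F - 1) = 1 :=
          FiniteField.pow_card_sub_one_eq_one _ (div_ne_zero hx0 hy0)
        have h1 := orderOf_dvd_of_pow_eq_one q3
        have h2 := orderOf_dvd_of_pow_eq_one qD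
        have h4 : orderOf (x / y) = 1 := Nat.eq_one_of_dvd_coprimes hcop h2 h1
        rw [orderOf_eq_one_iff] at h4
        exact (div_eq_one_iff_eq hy0).1 h4)
      have : (kap (qD (y :: l)) : ℝ) ≤ 2 := by exact_mod_cast this
      norm_num
      linarith
    · simp only [sum_const, card_univ, nsmul_eq_mul]
      linarith

lemma main_bound (T : F →+ ZMod 2) (hT : ∀ x, T (x ^ 2) = T x)
    (hN : ∀ a : F, a ≠ 0 → ∃ b, T (a * b) ≠ 0) (k n : ℕ) (hn : 2 * (k + 2) < n)
    (hD : Fintype.card F = 2 ^ n) (h : F → ZMod 2)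
    (hh : ∀ l : List F, l.length = k + 3 → ∀ x, dF h l x = T (qD l))
    (τ : ℝ) (hτ0 : 0 ≤ τ) (hτ : τ ^ 2 = 4 ^ (k + 2) / Fintype.card F) :
    |ww h| ^ 2 ^ (k + 1) ≤ τ := by
  have hDpos : (0 : ℝ) < Fintype.card F := by exact_mod_cast Fintype.card_pos
  refine (ww_gowers (k + 1) h).trans ?_
  have h1 : Iav (k + 1) (fun l => |ww (dF h l)|) ≤
      Iav k (fun l : List F => (if qD l = 0 then (1 : ℝ) else 0) +
        (2 ^ k / Fintype.card F + 7 / 8 * τ)) := by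
    rw [Iav]
    refine Iav_mono (F := F) k _ _ fun l hl => ?_
    split_ifs with hd
    · have : (∑ y : F, |ww (dF h (y :: l))|) / Fintype.card F ≤ 1 := by
        rw [div_le_one hDpos]
        refine (Finset.sum_le_sum fun y _ => ww_abs_le _).trans ?_
        simp
      have : 0 ≤ 2 ^ k / (Fintype.card F : ℝ) + 7 / 8 * τ := by positivity
      linarith
    · rw [zero_add]
      exact avg_step T hT hN k n hn hD h hh τ hτ0 hτ l hl hd
  refine h1.trans ?_
  rw [Iav_add_const]
  have h2 := Iav_dep (F := F) k
  have h3 : 2 ^ (k + 1) / (Fintype.card F : ℝ) ≤ τ / 8 := by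
    refine le_of_sq_le_sq ?_ (by positivity)
    rw [div_pow, div_pow, hτ]
    have hD16 : (16 : ℝ) ≤ Fintype.card F := by
      rw [hD]
      have : 2 ^ 4 ≤ 2 ^ n := Nat.pow_le_pow_right (by norm_num) (by omega)
      exact_mod_cast this
    have : (4 : ℝ) ^ (k + 2) = 4 * (2 ^ (k + 1)) ^ 2 := by
      rw [show (4 : ℝ) = 2 ^ 2 by norm_num, ← pow_mul]; ring
    rw [this, div_div, div_le_div_iff₀ (by positivity) (by positivity)]
    have hp : (0 : ℝ) ≤ (2 ^ (k + 1)) ^ 2 * Fintype.card F := by positivity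
    nlinarith
  have h4 : (2 ^ k - 1) / (Fintype.card F : ℝ) ≤ 2 ^ k / Fintype.card F := by
    gcongr; linarith
  have h5 : 2 ^ (k + 1) / (Fintype.card F : ℝ) = 2 ^ k / Fintype.card F + 2 ^ k / Fintype.card F := by
    rw [pow_succ]; ring
  linarith


lemma WW_hdist (f g : F → ZMod 2) :
    ({x : F | f x ≠ g x}.ncard : ℝ)
      = (Fintype.card F : ℝ) / 2 - Fintype.card F / 2 * ww (fun x => f x + g x) := by
  have hDpos : (0 : ℝ) < Fintype.card F := by exact_mod_cast Fintype.card_pos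
  have h1 : {x : F | f x ≠ g x}.ncard = (Finset.univ.filter fun x => f x ≠ g x).card := by
    rw [← Set.ncard_coe_finset]; simp
  have h2 : WW (fun x => f x + g x)
      = Fintype.card F - 2 * ((Finset.univ.filter fun x => f x ≠ g x).card : ℝ) := by
    have : ∀ x, chi (f x + g x) = 1 - 2 * (if f x ≠ g x then 1 else 0) := by
      intro x
      have : f x + g x = 0 ↔ f x = g x := CharTwo.add_eq_zero
      by_cases h : f x = g x
      · simp [chi, h, CharTwo.add_self_eq_zero]
      · simp [chi, this, h]; norm_num
    unfold WW
    simp only [this, Finset.sum_sub_distrib, ← Finset.mul_sum, Finset.sum_boole]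
    simp
  rw [h1, ww, h2]
  field_simp
  ring

end Gen

lemma derIter_eq_dF {n : ℕ} (f : Fq n → ZMod 2) (l : List (Fq n)) : derIter f l = dF f l := by
  induction l with
  | nil => rfl
  | cons a l ih => simp only [derIter, dF, ih]; rfl

/-- The trace as an additive homomorphism. -/
def trHom (n : ℕ) : Fq n →+ ZMod 2 := (Algebra.trace (ZMod 2) (Fq n)).toAddMonoidHom

lemma trHom_sq (n : ℕ) (x : Fq n) : trHom n (x ^ 2) = trHom n x := by
  have h := Algebra.trace_eq_of_algEquiv
    (FiniteField.frobeniusAlgEquivOfAlgebraic (ZMod 2) (Fq n)) x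
  rw [FiniteField.coe_frobeniusAlgEquivOfAlgebraic] at h
  have h' : Algebra.trace (ZMod 2) (Fq n) (x ^ 2) = Algebra.trace (ZMod 2) (Fq n) x := by
    simpa using h
  exact h'

lemma trHom_nondeg (n : ℕ) (a : Fq n) (ha : a ≠ 0) : ∃ b, trHom n (a * b) ≠ 0 := by
  by_contra H
  push Not at H
  refine ha ((traceForm_nondegenerate (ZMod 2) (Fq n)).1 a ?_)
  intro b
  exact H b

lemma ww_final (n r : ℕ) (hr : 2 ≤ r) (hrn : r < n) [Fintype (Fq n)] [DecidableEq (Fq n)]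
    (f g : Fq n → ZMod 2) (hf : ∀ x, f x = tr (x ^ (2 ^ (r + 1) - 1))) (hg : degLE g r) :
    ww (fun x => f x + g x) ≤ (2 : ℝ) ^ (((r : ℝ) - n / 2) / 2 ^ (r - 1)) := by
  have hD : Fintype.card (Fq n) = 2 ^ n := by
    rw [← Nat.card_eq_fintype_card, GaloisField.card 2 n (by omega)]
  refine (le_abs_self _).trans ?_
  by_cases hn : 2 * r < n
  · obtain ⟨k, rfl⟩ : ∃ k, r = k + 2 := ⟨r - 2, by omega⟩
    set τ : ℝ := (2 : ℝ) ^ (((k + 2 : ℕ) : ℝ) - n / 2) with hτd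
    have hτ0 : 0 < τ := by positivity
    have hτ : τ ^ 2 = 4 ^ (k + 2) / (Fintype.card (Fq n) : ℝ) := by
      rw [hD, hτd, ← Real.rpow_natCast, ← Real.rpow_mul (by norm_num)]
      push_cast
      rw [show (((k : ℝ) + 2) - n / 2) * 2 = 2 * ((k + 2 : ℕ) : ℝ) - (n : ℝ) by push_cast; ring,
        Real.rpow_sub (by norm_num), Real.rpow_mul (by norm_num), Real.rpow_natCast,
        Real.rpow_natCast]
      norm_num
    have hm := main_bound (trHom n) (trHom_sq n) (trHom_nondeg n) k n hn hD (fun x => f x + g x)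
      (fun l hl x => der_iter_const (trHom n) (k + 2) f g hf
        (fun l hl => by rw [← derIter_eq_dF]; exact hg l hl) l hl x) τ hτ0.le hτ
    have e : (2 : ℝ) ^ ((((k + 2 : ℕ) : ℝ) - n / 2) / 2 ^ (k + 2 - 1))
        = τ ^ ((1 : ℝ) / ((2 ^ (k + 1) : ℕ) : ℝ)) := by
      rw [hτd, ← Real.rpow_mul (by norm_num)]
      congr 1
      rw [show k + 2 - 1 = k + 1 by omega]
      push_cast
      ring
    rw [e]
    have h2 : |ww (fun x => f x + g x)|
        = (|ww (fun x => f x + g x)| ^ 2 ^ (k + 1)) ^ ((1 : ℝ) / ((2 ^ (k + 1) : ℕ) : ℝ)) := by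
      rw [one_div, Real.pow_rpow_inv_natCast (abs_nonneg _) (by positivity)]
    rw [h2]
    exact Real.rpow_le_rpow (by positivity) hm (by positivity)
  · refine (ww_abs_le _).trans ?_
    refine Real.one_le_rpow (by norm_num) ?_
    refine div_nonneg ?_ (by positivity)
    have : (n : ℝ) ≤ 2 * r := by exact_mod_cast (not_lt.1 hn)
    linarith

/-- `r`-th order nonlinearity lower bound for `tr(x^(2^(r+1)-1))`. -/
theorem rth_order_nl_tr (n r : ℕ) (hr : 2 ≤ r) (hrn : r < n)
    (f : Fq n → ZMod 2) (hf : ∀ x, f x = tr (x ^ (2 ^ (r + 1) - 1))) :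
    (nl r f : ℝ) ≥ (2:ℝ) ^ ((n:ℝ) - 1)
      - (2:ℝ) ^ ((1 - (2:ℝ) ^ (-(r:ℝ))) * (n:ℝ) + (r:ℝ) / (2:ℝ) ^ ((r:ℝ) - 1) - 1)
      - ∑ j ∈ Finset.Icc 1 (r - 1), (j:ℝ) *
          (2:ℝ) ^ (((2:ℝ) ^ (j:ℝ) - 1) / (2:ℝ) ^ (r:ℝ) * (n:ℝ)
            - ((2:ℝ) ^ (j:ℝ) - 1) / (2:ℝ) ^ ((r:ℝ) - 1) * (r:ℝ) - ((j:ℝ) + 1)) := by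
  classical
  letI : Fintype (Fq n) := Fintype.ofFinite _
  have hD : Fintype.card (Fq n) = 2 ^ n := by
    rw [← Nat.card_eq_fintype_card, GaloisField.card 2 n (by omega)]
  have hne : {d : ℕ | ∃ g : Fq n → ZMod 2, degLE g r ∧ d = hdist f g}.Nonempty := by
    refine ⟨_, fun _ => 0, ?_, rfl⟩
    intro l _
    rw [derIter_eq_dF]
    funext x
    exact dF_zero l x
  obtain ⟨g, hg, hnl⟩ := Nat.sInf_mem hne
  have hnl' : nl r f = hdist f g := hnl
  have hsum : 0 ≤ ∑ j ∈ Finset.Icc 1 (r - 1), (j:ℝ) *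
          (2:ℝ) ^ (((2:ℝ) ^ (j:ℝ) - 1) / (2:ℝ) ^ (r:ℝ) * (n:ℝ)
            - ((2:ℝ) ^ (j:ℝ) - 1) / (2:ℝ) ^ ((r:ℝ) - 1) * (r:ℝ) - ((j:ℝ) + 1)) :=
    Finset.sum_nonneg fun j _ => by positivity
  have hw := ww_final n r hr hrn f g hf hg
  have h1 : (hdist f g : ℝ) = _ := WW_hdist f g
  have h2 : (Fintype.card (Fq n) : ℝ) / 2 = (2 : ℝ) ^ ((n : ℝ) - 1) := by
    rw [hD, Real.rpow_sub (by norm_num), Real.rpow_natCast]; simp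
  have h3 : (2:ℝ) ^ ((1 - (2:ℝ) ^ (-(r:ℝ))) * (n:ℝ) + (r:ℝ) / (2:ℝ) ^ ((r:ℝ) - 1) - 1)
      = (2 : ℝ) ^ ((n : ℝ) - 1) * (2 : ℝ) ^ (((r : ℝ) - n / 2) / 2 ^ (r - 1)) := by
    rw [← Real.rpow_add (by norm_num)]
    congr 1
    obtain ⟨k, rfl⟩ : ∃ k, r = k + 1 := ⟨r - 1, by omega⟩
    rw [Real.rpow_neg (by norm_num), Real.rpow_natCast,
      show (((k + 1 : ℕ) : ℝ) - 1) = (k : ℝ) by push_cast; ring, Real.rpow_natCast,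
      show k + 1 - 1 = k by omega, pow_succ]
    field_simp
    ring
  have h4 : (2 : ℝ) ^ ((n : ℝ) - 1) * ww (fun x => f x + g x)
      ≤ (2 : ℝ) ^ ((n : ℝ) - 1) * (2 : ℝ) ^ (((r : ℝ) - n / 2) / 2 ^ (r - 1)) :=
    mul_le_mul_of_nonneg_left hw (by positivity)
  rw [hnl', h1, h2, h3]
  linarith
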